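/- Let F(z, w) = (z + (1/2)z²w, w + (1/2)zw²) and g(ζ) = ζ·(1 + (1/2)ζ)². For every (z, w) ∈ ℂ² \ {(0,0)}: F^n(z, w) → (0, 0) as n → ∞ if and only if zw ≠ 0 and g^n(zw) → 0 as n → ∞. In other words, the basin of attraction of F is Ω_F = {(z, w) ∈ ℂ² : zw ∈ C̃}, where C̃ = {ζ ∈ ℂ \ {0} : g^n(ζ) → 0} is the basin of attraction of g. -/

import Mathlib

/-!
`F` multiplies each point `p = (z, w)` by the scalar `φ (q p)`, where `q p = zw` and
`φ ζ = 1 + ζ / 2`, so `F^[n] p = cₙ p` for some scalar `cₙ`. As `q` is homogeneous of degree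
`d = 2`, it semiconjugates `F` to `g ζ = φ ζ ^ d * ζ`, whence
`g^[n] (q p) = q (cₙ p) = cₙ ^ d * q p`. If `q p ≠ 0`, both orbits therefore tend to `0` exactly
when `cₙ` does. If `q p = 0`, then `cₙ = φ 0 ^ n`, which does not tend to `0` because `1 ≤ ‖φ 0‖`.
-/

open Filter Set

/-- The map `F(z, w) = (z + (1/2)z²w, w + (1/2)zw²) = (z, w)·(1 + (1/2)zw)`. -/
noncomputable def Fex (p : ℂ × ℂ) : ℂ × ℂ :=
  (p.1 + (1 / 2) * p.1 ^ 2 * p.2, p.2 + (1 / 2) * p.1 * p.2 ^ 2)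

/-- The one-variable polynomial `g(ζ) = ζ·(1 + (1/2)ζ)²`. -/
noncomputable def gex (ζ : ℂ) : ℂ := ζ * (1 + (1 / 2) * ζ) ^ 2

/-- The basin of attraction `Ω_F = {p ∈ ℂ² \ {0} : F^[n] p → 0}`. -/
noncomputable def basinFex : Set (ℂ × ℂ) :=
  {p | p ≠ 0 ∧ Tendsto (fun n => Fex^[n] p) atTop (nhds 0)}

/-- The one-variable basin `C̃ = {ζ ∈ ℂ \ {0} : g^[n] ζ → 0}`. -/
noncomputable def Ctilde : Set ℂ :=
  {ζ | ζ ≠ 0 ∧ Tendsto (fun n => gex^[n] ζ) atTop (nhds 0)}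

open scoped Topology

/-- The basin of attraction of the origin under `f`, with the origin itself removed; it is `Ω_F` for
`f = F` and `C̃` for `f = g`. -/
def puncturedBasin {X : Type*} [Zero X] [TopologicalSpace X] (f : X → X) : Set X :=
  {x | x ≠ 0 ∧ Tendsto (fun n => f^[n] x) atTop (𝓝 0)}

/-- The map `x ↦ φ (q x) • x`, which moves each point along its own line by a factor depending only
on the scalar `q x`. Both `F` and, with `q = id`, `g` have this form. -/
def radialMap {𝕜 E : Type*} [SMul 𝕜 E] (φ : 𝕜 → 𝕜) (q : E → 𝕜) (x : E) : E :=
  φ (q x) • x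

theorem exists_radialMap_iterate_eq_smul {𝕜 E : Type*} [Monoid 𝕜] [MulAction 𝕜 E] (φ : 𝕜 → 𝕜)
    (q : E → 𝕜) (x : E) (n : ℕ) : ∃ c : 𝕜, (radialMap φ q)^[n] x = c • x := by
  induction n with
  | zero => exact ⟨1, (one_smul 𝕜 x).symm⟩
  | succ n ih =>
    obtain ⟨c, hc⟩ := ih
    exact ⟨φ (q (c • x)) * c, by rw [Function.iterate_succ_apply', hc, radialMap, mul_smul]⟩

theorem semiconj_radialMap_pow {𝕜 E : Type*} [Monoid 𝕜] [SMul 𝕜 E] {q : E → 𝕜} {d : ℕ}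
    (hq : ∀ (c : 𝕜) x, q (c • x) = c ^ d * q x) (φ : 𝕜 → 𝕜) :
    Function.Semiconj q (radialMap φ q) (radialMap (φ ^ d) id) :=
  fun x => hq (φ (q x)) x

theorem radialMap_iterate_of_apply_eq_zero {𝕜 E : Type*} [MonoidWithZero 𝕜] [MulAction 𝕜 E]
    {q : E → 𝕜} {d : ℕ} (hq : ∀ (c : 𝕜) x, q (c • x) = c ^ d * q x) (φ : 𝕜 → 𝕜) {x : E}
    (hx : q x = 0) (n : ℕ) : (radialMap φ q)^[n] x = φ 0 ^ n • x := by
  induction n with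
  | zero => rw [Function.iterate_zero_apply, pow_zero, one_smul]
  | succ n ih =>
    rw [Function.iterate_succ_apply', ih, radialMap, hq, hx, mul_zero, smul_smul, pow_succ']

theorem tendsto_pow_zero_iff {α R : Type*} [NormedRing R] [NormOneClass R] [NormMulClass R]
    {l : Filter α} {f : α → R} {d : ℕ} (hd : d ≠ 0) :
    Tendsto (fun a => f a ^ d) l (𝓝 0) ↔ Tendsto f l (𝓝 0) := by
  constructor
  · intro h
    rw [← Asymptotics.isLittleO_one_iff ℝ] at h ⊢
    exact Asymptotics.IsLittleO.of_pow (by simpa [Pi.pow_def] using h) hd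
  · intro h
    simpa [hd] using h.pow d

section TopologicalVectorSpace

variable {𝕜 E : Type*} [NontriviallyNormedField 𝕜] [CompleteSpace 𝕜] [AddCommGroup E] [Module 𝕜 E]
  [TopologicalSpace E] [IsTopologicalAddGroup E] [ContinuousSMul 𝕜 E] [T2Space E]

theorem tendsto_smul_const_zero_iff {α : Type*} {l : Filter α} {c : α → 𝕜} {x : E} (hx : x ≠ 0) :
    Tendsto (fun a => c a • x) l (𝓝 0) ↔ Tendsto c l (𝓝 0) := by
  rw [(isClosedEmbedding_smul_left (𝕜 := 𝕜) hx).isInducing.tendsto_nhds_iff, zero_smul,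
    Function.comp_def]

variable {φ : 𝕜 → 𝕜} {q : E → 𝕜} {d : ℕ}

theorem tendsto_radialMap_iterate_iff (hd : d ≠ 0) (hq : ∀ (c : 𝕜) x, q (c • x) = c ^ d * q x)
    {x : E} (hx : x ≠ 0) (hqx : q x ≠ 0) :
    Tendsto (fun n => (radialMap φ q)^[n] x) atTop (𝓝 0) ↔
      Tendsto (fun n => (radialMap (φ ^ d) id)^[n] (q x)) atTop (𝓝 0) := by
  choose c hc using exists_radialMap_iterate_eq_smul φ q x
  have hquot (n : ℕ) : (radialMap (φ ^ d) id)^[n] (q x) = c n ^ d • q x := by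
    rw [← (semiconj_radialMap_pow hq φ).iterate_right n x, hc, hq, smul_eq_mul]
  simp only [hc, hquot, tendsto_smul_const_zero_iff hx, tendsto_smul_const_zero_iff hqx,
    tendsto_pow_zero_iff hd]

theorem not_tendsto_radialMap_iterate_of_apply_eq_zero (hq : ∀ (c : 𝕜) x, q (c • x) = c ^ d * q x)
    (hφ : 1 ≤ ‖φ 0‖) {x : E} (hx : x ≠ 0) (hqx : q x = 0) :
    ¬ Tendsto (fun n => (radialMap φ q)^[n] x) atTop (𝓝 0) := by
  simpa only [radialMap_iterate_of_apply_eq_zero hq φ hqx, tendsto_smul_const_zero_iff hx,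
    tendsto_pow_atTop_nhds_zero_iff_norm_lt_one, not_lt] using hφ

theorem basinFex_eq_general (hd : d ≠ 0) (hq : ∀ (c : 𝕜) x, q (c • x) = c ^ d * q x)
    (hφ : 1 ≤ ‖φ 0‖) :
    (∀ x : E, x ≠ 0 →
      (Tendsto (fun n => (radialMap φ q)^[n] x) atTop (𝓝 0) ↔
        q x ≠ 0 ∧ Tendsto (fun n => (radialMap (φ ^ d) id)^[n] (q x)) atTop (𝓝 0))) ∧
    puncturedBasin (radialMap φ q) = {x : E | q x ∈ puncturedBasin (radialMap (φ ^ d) id)} := by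
  have hiff (x : E) (hx : x ≠ 0) :
      Tendsto (fun n => (radialMap φ q)^[n] x) atTop (𝓝 0) ↔
        q x ∈ puncturedBasin (radialMap (φ ^ d) id) := by
    by_cases hqx : q x = 0
    · exact iff_of_false (not_tendsto_radialMap_iterate_of_apply_eq_zero hq hφ hx hqx)
        fun h => h.1 hqx
    · exact (tendsto_radialMap_iterate_iff hd hq hx hqx).trans (and_iff_right hqx).symm
  have hq0 : q 0 = 0 := by simpa [hd] using hq 0 0
  refine ⟨hiff, Set.ext fun x => ⟨fun h => (hiff x h.1).1 h.2, fun h => ?_⟩⟩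
  have hx : x ≠ 0 := ne_of_apply_ne q (hq0 ▸ h.1)
  exact ⟨hx, (hiff x hx).2 h⟩

end TopologicalVectorSpace

theorem Fex_eq_radialMap : Fex = radialMap (fun ζ => 1 + 1 / 2 * ζ) fun p => p.1 * p.2 := by
  ext p <;> simp only [Fex, radialMap, Prod.smul_fst, Prod.smul_snd, smul_eq_mul] <;> ring

theorem gex_eq_radialMap : gex = radialMap ((fun ζ => 1 + 1 / 2 * ζ) ^ 2) id :=
  funext fun _ => mul_comm _ _

theorem smul_fst_mul_smul_snd {M : Type*} [CommMonoid M] (c : M) (p : M × M) :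
    (c • p).1 * (c • p).2 = c ^ 2 * (p.1 * p.2) := by
  rw [Prod.smul_fst, Prod.smul_snd, smul_mul_smul_comm, ← sq, smul_eq_mul]

/-- For every `(z, w) ∈ ℂ² \ {0}`, `F^[n](z, w) → 0` iff `zw ≠ 0` and
`g^[n](zw) → 0`; in other words, the basin of `F` is `{(z, w) : zw ∈ C̃}`. -/
theorem basinFex_eq :
    (∀ p : ℂ × ℂ, p ≠ 0 →
      (Tendsto (fun n => Fex^[n] p) atTop (nhds 0) ↔
        p.1 * p.2 ≠ 0 ∧ Tendsto (fun n => gex^[n] (p.1 * p.2)) atTop (nhds 0))) ∧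
    basinFex = {p : ℂ × ℂ | p.1 * p.2 ∈ Ctilde} := by
  have h := basinFex_eq_general (φ := fun ζ : ℂ => 1 + 1 / 2 * ζ)
    (q := fun p : ℂ × ℂ => p.1 * p.2) two_ne_zero smul_fst_mul_smul_snd (by simp)
  rwa [← Fex_eq_radialMap, ← gex_eq_radialMap] at h
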